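/- Let N ≥ 2 be an integer and s ∈ (1/2, 1). For every M > 0 and every ρ ∈ (0, 1) there exists a constant C_{ρ,M} > 0 such that for every radial u ∈ C_c^∞(B) with u ≡ 0 on the ball B_ρ: Q_{N,s,B}(u) ≥ M·‖u‖²_{L^{2*_s}(B)} − C_{ρ,M}·‖u‖²_{L²(B)}. -/

import Mathlib

open MeasureTheory Real Filter Topology Set

noncomputable section

/-- Euclidean space ℝ^N. -/
abbrev Euc (N : ℕ) := EuclideanSpace ℝ (Fin N)

/-- The normalization constant c_{N,s}. -/
def cNs (N : ℕ) (s : ℝ) : ℝ :=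
  s * (4 : ℝ) ^ s * Real.Gamma (((N : ℝ) + 2 * s) / 2) /
    (Real.pi ^ ((N : ℝ) / 2) * Real.Gamma (1 - s))

/-- The Gagliardo quadratic form Q_{N,s,U}. -/
def gagliardo (N : ℕ) (s : ℝ) (U : Set (Euc N)) (u : Euc N → ℝ) : ℝ :=
  (cNs N s / 2) * ∫ x in U, ∫ y in U, (u x - u y) ^ 2 / ‖x - y‖ ^ ((N : ℝ) + 2 * s)

/-- The L^p norm of u on a set U. -/
def lpNormOn (N : ℕ) (p : ℝ) (U : Set (Euc N)) (u : Euc N → ℝ) : ℝ :=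
  (∫ x in U, |u x| ^ p) ^ (1 / p)

/-- The fractional critical Sobolev exponent 2*_s = 2N/(N-2s). -/
def critExp (N : ℕ) (s : ℝ) : ℝ := 2 * (N : ℝ) / ((N : ℝ) - 2 * s)

/-- Smooth compactly supported test function in U. -/
def testFun (N : ℕ) (U : Set (Euc N)) (u : Euc N → ℝ) : Prop :=
  ContDiff ℝ (⊤ : ℕ∞) u ∧ HasCompactSupport u ∧ tsupport u ⊆ U

/-- The critical fractional Sobolev constant S_{N,s}(U). -/
def sobolevConst (N : ℕ) (s : ℝ) (U : Set (Euc N)) : ℝ :=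
  sInf { r | ∃ u, testFun N U u ∧ ¬ (∀ x, u x = 0) ∧
    r = gagliardo N s U u / (lpNormOn N (critExp N s) U u) ^ 2 }

/-- The open cylinder B'_r × (-r, r) in ℝ^{N-1} × ℝ. -/
def cylinder (N : ℕ) (r : ℝ) : Set (EuclideanSpace ℝ (Fin (N - 1)) × ℝ) :=
  (Metric.ball 0 r) ×ˢ (Set.Ioo (-r) r)

/-- A bounded open set is Lipschitz: near each boundary point the boundary is the
bi-Lipschitz image of a flat piece. -/
def IsLipschitzSet (N : ℕ) (Ω : Set (Euc N)) : Prop :=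
  ∀ q ∈ frontier Ω, ∃ (r C : ℝ) (Φ : EuclideanSpace ℝ (Fin (N - 1)) × ℝ → Euc N),
    0 < r ∧ 1 < C ∧
    (∀ x ∈ cylinder N r, ∀ y ∈ cylinder N r,
      C⁻¹ * dist x y ≤ dist (Φ x) (Φ y) ∧ dist (Φ x) (Φ y) ≤ C * dist x y) ∧
    IsOpen (Φ '' cylinder N r) ∧ q ∈ Φ '' cylinder N r ∧
    Φ '' ((Metric.ball 0 r) ×ˢ (Set.Ioo 0 r)) ⊆ Ω ∧
    Φ '' ((Metric.ball 0 r) ×ˢ ({0} : Set ℝ)) ⊆ frontier Ω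

/-- Membership in H^s_0(U): approximation by smooth compactly supported functions
in L²(U) and in the Gagliardo form. -/
def memHs0 (N : ℕ) (s : ℝ) (U : Set (Euc N)) (u : Euc N → ℝ) : Prop :=
  ∃ v : ℕ → Euc N → ℝ, (∀ k, testFun N U (v k)) ∧
    Tendsto (fun k => ∫ x in U, (v k x - u x) ^ 2) atTop (nhds 0) ∧
    Tendsto (fun k => gagliardo N s U (fun x => v k x - u x)) atTop (nhds 0)

/-- A radial function on ℝ^N. -/
def IsRadial (N : ℕ) (u : Euc N → ℝ) : Prop :=
  ∀ x y : Euc N, ‖x‖ = ‖y‖ → u x = u y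

/-- The open unit ball of ℝ^N. -/
def unitBall (N : ℕ) : Set (Euc N) := Metric.ball 0 1

/-- The radial critical Sobolev constant S_{N,s,rad}(B,h) on the unit ball. -/
def sobolevConstRad (N : ℕ) (s : ℝ) (h : Euc N → ℝ) : ℝ :=
  sInf { r | ∃ u, testFun N (unitBall N) u ∧ IsRadial N u ∧ ¬ (∀ x, u x = 0) ∧
    r = (gagliardo N s (unitBall N) u + ∫ x in unitBall N, h x * (u x) ^ 2) /
        (lpNormOn N (critExp N s) (unitBall N) u) ^ 2 }

/-- Membership in H^s_{0,rad}(B): radial, approximated by radial test functions. -/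
def memHs0rad (N : ℕ) (s : ℝ) (u : Euc N → ℝ) : Prop :=
  IsRadial N u ∧ ∃ v : ℕ → Euc N → ℝ,
    (∀ k, testFun N (unitBall N) (v k) ∧ IsRadial N (v k)) ∧
    Tendsto (fun k => ∫ x in unitBall N, (v k x - u x) ^ 2) atTop (nhds 0) ∧
    Tendsto (fun k => gagliardo N s (unitBall N) (fun x => v k x - u x)) atTop (nhds 0)

/-- The fractional Laplacian of a test function. -/
def fracLap (N : ℕ) (s : ℝ) (φ : Euc N → ℝ) (x : Euc N) : ℝ :=
  (cNs N s / 2) * ∫ z : Euc N, (2 * φ x - φ (x + z) - φ (x - z)) / ‖z‖ ^ ((N : ℝ) + 2 * s)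


/-- The Gagliardo kernel applied to `u`. -/
def Fk (N : ℕ) (p : ℝ) (u : Euc N → ℝ) (x y : Euc N) : ℝ :=
  (u x - u y) ^ 2 / ‖x - y‖ ^ p

lemma Fk_nonneg (N : ℕ) (p : ℝ) (u : Euc N → ℝ) (x y : Euc N) : 0 ≤ Fk N p u x y := by
  unfold Fk; positivity

lemma Fk_measurable (N : ℕ) (p : ℝ) (u : Euc N → ℝ) (hu : Continuous u) :
    Measurable (fun z : Euc N × Euc N => Fk N p u z.1 z.2) := by
  unfold Fk
  have h1 : Measurable u := hu.measurable
  have := hu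
  apply Measurable.div
  · fun_prop
  · exact ((measurable_fst.sub measurable_snd).norm).pow_const p

/-- Integrability of the kernel in the second variable, with a uniform bound. -/
lemma Fk_integrable (N : ℕ) (hN : 2 ≤ N) (p : ℝ) (hp : p < N + 2) (u : Euc N → ℝ)
    (L : NNReal) (hu : LipschitzWith L u) :
    ∃ K : ℝ, ∀ x ∈ unitBall N, IntegrableOn (Fk N p u x) (unitBall N) ∧
      ∫ y in unitBall N, Fk N p u x y ≤ K := by
  set G : Euc N → ℝ := fun z => (L : ℝ) ^ 2 * ‖z‖ ^ (-(p - 2)) with hG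
  have hGi : IntegrableOn G (Metric.ball 0 2) := by
    refine integrableOn_ball_of_norm_le_rpow (C := (L : ℝ) ^ 2) (α := p - 2) ?_ ?_ ?_ ?_
    · simp; omega
    · simp; linarith
    · refine Eventually.of_forall fun x => ?_
      rw [Real.norm_of_nonneg (by positivity)]
    · exact (measurable_const.mul (measurable_norm.pow_const _)).aestronglyMeasurable
  set H : Euc N → ℝ := (Metric.ball (0 : Euc N) 2).indicator G with hH
  have hHi : Integrable H := (integrable_indicator_iff measurableSet_ball).2 hGi
  have hH0 : ∀ z, 0 ≤ H z := fun z => indicator_nonneg (fun z _ => by positivity) z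
  refine ⟨∫ z, H z, fun x hx => ?_⟩
  have hx' : ‖x‖ < 1 := by simpa [unitBall] using hx
  have hle : ∀ y ∈ unitBall N, Fk N p u x y ≤ H (y - x) := by
    intro y hy
    have hy' : ‖y‖ < 1 := by simpa [unitBall] using hy
    by_cases hxy : x = y
    · subst hxy
      have : Fk N p u x x = 0 := by simp [Fk]
      rw [this]; exact hH0 _
    have hmem : y - x ∈ Metric.ball (0 : Euc N) 2 := by
      rw [mem_ball_zero_iff]
      calc ‖y - x‖ ≤ ‖y‖ + ‖x‖ := norm_sub_le _ _
        _ < 2 := by linarith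
    rw [hH, indicator_of_mem hmem, hG]
    have hpos : 0 < ‖x - y‖ := norm_pos_iff.2 (sub_ne_zero.2 hxy)
    simp only [Fk]
    rw [norm_sub_rev y x, neg_sub, Real.rpow_sub hpos, Real.rpow_two, ← mul_div_assoc, ← mul_pow]
    have h := hu.dist_le_mul x y
    rw [Real.dist_eq, dist_eq_norm] at h
    rw [← sq_abs (u x - u y)]
    gcongr
  have hHx : Integrable (fun y => H (y - x)) := hHi.comp_sub_right x
  have hmeas : Measurable (Fk N p u x) :=
    (Fk_measurable N p u hu.continuous).comp measurable_prodMk_left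
  have hint : IntegrableOn (Fk N p u x) (unitBall N) := by
    refine Integrable.mono' (hHx.integrableOn (s := unitBall N)) hmeas.aestronglyMeasurable ?_
    refine (ae_restrict_iff' measurableSet_ball).2 (Eventually.of_forall fun y hy => ?_)
    rw [Real.norm_of_nonneg (Fk_nonneg _ _ _ _ _)]
    exact hle y hy
  refine ⟨hint, ?_⟩
  calc ∫ y in unitBall N, Fk N p u x y ≤ ∫ y in unitBall N, H (y - x) :=
        setIntegral_mono_on hint hHx.integrableOn measurableSet_ball hle
    _ ≤ ∫ y, H (y - x) := setIntegral_le_integral hHx (Eventually.of_forall fun y => hH0 _)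
    _ = ∫ y, H y := integral_sub_right_eq_self H x

lemma Ik_integrable (N : ℕ) (hN : 2 ≤ N) (p : ℝ) (hp : p < N + 2) (u : Euc N → ℝ)
    (L : NNReal) (hu : LipschitzWith L u) :
    IntegrableOn (fun x => ∫ y in unitBall N, Fk N p u x y) (unitBall N) := by
  obtain ⟨K, hK⟩ := Fk_integrable N hN p hp u L hu
  have hm : StronglyMeasurable (fun x => ∫ y in unitBall N, Fk N p u x y) :=
    StronglyMeasurable.integral_prod_right
      (f := fun x y => Fk N p u x y) (Fk_measurable N p u hu.continuous).stronglyMeasurable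
  refine Measure.integrableOn_of_bounded (M := K) (by simp [unitBall]; exact measure_ball_lt_top.ne)
    hm.aestronglyMeasurable ?_
  refine (ae_restrict_iff' measurableSet_ball).2 (Eventually.of_forall fun y hy => ?_)
  rw [Real.norm_of_nonneg (integral_nonneg fun _ => Fk_nonneg _ _ _ _ _)]
  exact (hK y hy).2

/-- Pointwise dilation estimate. -/
lemma dilation_pointwise (N : ℕ) (hN : 2 ≤ N) (p : ℝ) (hp0 : 0 < p) (hp : p < N + 2) (u : Euc N → ℝ)
    (L : NNReal) (hu : LipschitzWith L u) (h : ℝ) (h0 : 0 < h) (h1 : h ≤ 1 / 2)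
    (x : Euc N) (hx : x ∈ unitBall N) :
    volume.real (unitBall N) * h ^ N * (u x - u ((1 - h) • x)) ^ 2 ≤
      2 * (2 * h) ^ p * (∫ y in unitBall N, Fk N p u x y) +
      2 * h ^ p * ∫ y in unitBall N, Fk N p u ((1 - h) • x) y := by
  obtain ⟨K, hK⟩ := Fk_integrable N hN p hp u L hu
  have hx' : ‖x‖ < 1 := by simpa [unitBall] using hx
  set w := (1 - h) • x with hw
  have hwn : ‖w‖ ≤ 1 - h := by
    rw [hw, norm_smul, Real.norm_of_nonneg (by linarith)]
    nlinarith [norm_nonneg x]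
  have hwB : w ∈ unitBall N := by
    rw [unitBall, mem_ball_zero_iff]; linarith
  have hxw : ‖x - w‖ ≤ h := by
    have : x - w = h • x := by rw [hw, sub_smul, one_smul]; abel
    rw [this, norm_smul, Real.norm_of_nonneg h0.le]
    nlinarith [norm_nonneg x]
  have hsub : Metric.ball w h ⊆ unitBall N := by
    intro y hy
    rw [unitBall, mem_ball_zero_iff]
    rw [mem_ball_iff_norm] at hy
    have : ‖y‖ ≤ ‖y - w‖ + ‖w‖ := by simpa using norm_add_le (y - w) w
    linarith
  have key : ∀ a b : Euc N, ∀ R : ℝ, ‖a - b‖ ≤ R → (u a - u b) ^ 2 ≤ R ^ p * Fk N p u a b := by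
    intro a b R hR
    by_cases hab : a = b
    · subst hab; simp [Fk]
    have hpos : 0 < ‖a - b‖ := norm_pos_iff.2 (sub_ne_zero.2 hab)
    have h2 : ‖a - b‖ ^ p ≤ R ^ p := Real.rpow_le_rpow hpos.le hR hp0.le
    have h3 : 0 < ‖a - b‖ ^ p := Real.rpow_pos_of_pos hpos p
    unfold Fk
    rw [mul_div_assoc', le_div_iff₀ h3, mul_comm]
    exact mul_le_mul_of_nonneg_right h2 (sq_nonneg _)
  have hpt : ∀ y ∈ Metric.ball w h, (u x - u w) ^ 2 ≤
      2 * (2 * h) ^ p * Fk N p u x y + 2 * h ^ p * Fk N p u w y := by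
    intro y hy
    rw [mem_ball_iff_norm] at hy
    have e1 := key x y (2 * h) (by
      have : ‖x - y‖ ≤ ‖x - w‖ + ‖y - w‖ := by
        rw [norm_sub_rev y w]; simpa using norm_add_le (x - w) (w - y)
      linarith)
    have e2 := key w y h (by rw [norm_sub_rev]; exact hy.le)
    nlinarith [sq_nonneg (u x - u y - (u y - u w)), sq_nonneg (u x - u y + (u w - u y))]
  have i1 := (hK x hx).1
  have i2 := (hK w hwB).1
  have hvol : volume.real (Metric.ball w h) = volume.real (unitBall N) * h ^ N := by
    have := Measure.addHaar_ball_of_pos (volume : Measure (Euc N)) w h0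
    rw [Measure.real, this, ENNReal.toReal_mul, ENNReal.toReal_ofReal (by positivity), mul_comm]
    simp [unitBall, Measure.real]
  have hc : ∫ y in Metric.ball w h, (u x - u w) ^ 2 =
      volume.real (unitBall N) * h ^ N * (u x - u w) ^ 2 := by
    rw [setIntegral_const, hvol, smul_eq_mul]
  rw [← hc]
  calc ∫ y in Metric.ball w h, (u x - u w) ^ 2
      ≤ ∫ y in Metric.ball w h,
        (2 * (2 * h) ^ p * Fk N p u x y + 2 * h ^ p * Fk N p u w y) := by
        refine setIntegral_mono_on ?_ ?_ measurableSet_ball hpt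
        · exact integrableOn_const measure_ball_lt_top.ne
        · exact ((i1.mono_set hsub).const_mul _).add ((i2.mono_set hsub).const_mul _)
    _ ≤ ∫ y in unitBall N,
        (2 * (2 * h) ^ p * Fk N p u x y + 2 * h ^ p * Fk N p u w y) := by
        refine setIntegral_mono_set ((i1.const_mul _).add (i2.const_mul _)) ?_
          hsub.eventuallyLE
        refine Eventually.of_forall fun y => ?_
        have := Fk_nonneg N p u x y
        have := Fk_nonneg N p u w y
        simp only [Pi.zero_apply]; positivity
    _ = _ := by
        rw [integral_add (i1.const_mul _) (i2.const_mul _), integral_const_mul, integral_const_mul]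

open scoped Pointwise in
/-- Integrated dilation estimate. -/
lemma dilation_est (N : ℕ) (hN : 2 ≤ N) (p : ℝ) (hp0 : 0 < p) (hp : p < N + 2) (u : Euc N → ℝ)
    (L : NNReal) (hu : LipschitzWith L u) (h : ℝ) (h0 : 0 < h) (h1 : h ≤ 1 / 2) :
    volume.real (unitBall N) * h ^ N * (∫ x in unitBall N, (u x - u ((1 - h) • x)) ^ 2) ≤
      (2 * 2 ^ p + 2 * 2 ^ N) * h ^ p *
        ∫ x in unitBall N, ∫ y in unitBall N, Fk N p u x y := by
  set I : Euc N → ℝ := fun x => ∫ y in unitBall N, Fk N p u x y with hI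
  have hIi : IntegrableOn I (unitBall N) := Ik_integrable N hN p hp u L hu
  have hI0 : ∀ x, 0 ≤ I x := fun x => integral_nonneg fun _ => Fk_nonneg _ _ _ _ _
  have hl : (0 : ℝ) < 1 - h := by linarith
  have hsub : (1 - h) • unitBall N ⊆ unitBall N := by
    rintro _ ⟨x, hx, rfl⟩
    have hx' : ‖x‖ < 1 := by simpa [unitBall] using hx
    simp only [unitBall, mem_ball_zero_iff, norm_smul, Real.norm_of_nonneg hl.le]
    nlinarith [norm_nonneg x]
  have hIl : IntegrableOn (fun x => I ((1 - h) • x)) (unitBall N) := by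
    have hJ : Integrable ((unitBall N).indicator I) :=
      (integrable_indicator_iff measurableSet_ball).2 hIi
    have := (hJ.comp_smul hl.ne').integrableOn (s := unitBall N)
    refine this.congr_fun (fun x hx => ?_) measurableSet_ball
    exact indicator_of_mem (hsub (smul_mem_smul_set hx)) _
  have hIle : ∫ x in unitBall N, I ((1 - h) • x) ≤ 2 ^ N * ∫ x in unitBall N, I x := by
    rw [Measure.setIntegral_comp_smul_of_pos volume I _ hl]
    have e1 : ∫ x in (1 - h) • unitBall N, I x ≤ ∫ x in unitBall N, I x :=
      setIntegral_mono_set hIi (Eventually.of_forall hI0) hsub.eventuallyLE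
    have e2 : ((1 - h) ^ Module.finrank ℝ (Euc N))⁻¹ ≤ 2 ^ N := by
      rw [finrank_euclideanSpace_fin, ← inv_pow]
      gcongr
      rw [inv_le_comm₀ hl (by norm_num)]; linarith
    have e3 : 0 ≤ ∫ x in (1 - h) • unitBall N, I x := integral_nonneg hI0
    rw [smul_eq_mul]
    exact mul_le_mul e2 e1 e3 (by positivity)
  have huc := hu.continuous
  have hint : IntegrableOn (fun x => (u x - u ((1 - h) • x)) ^ 2) (unitBall N) := by
    have : Continuous (fun x => (u x - u ((1 - h) • x)) ^ 2) := by fun_prop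
    exact (this.continuousOn.integrableOn_compact (isCompact_closedBall (0 : Euc N) 1)).mono_set
      Metric.ball_subset_closedBall
  rw [← integral_const_mul]
  calc ∫ x in unitBall N, volume.real (unitBall N) * h ^ N * (u x - u ((1 - h) • x)) ^ 2
      ≤ ∫ x in unitBall N, (2 * (2 * h) ^ p * I x + 2 * h ^ p * I ((1 - h) • x)) := by
        refine setIntegral_mono_on (hint.const_mul _)
          ((hIi.const_mul _).add (hIl.const_mul _)) measurableSet_ball fun x hx => ?_
        exact dilation_pointwise N hN p hp0 hp u L hu h h0 h1 x hx
    _ = 2 * (2 * h) ^ p * (∫ x in unitBall N, I x) +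
        2 * h ^ p * ∫ x in unitBall N, I ((1 - h) • x) := by
        rw [integral_add (hIi.const_mul _) (hIl.const_mul _), integral_const_mul,
          integral_const_mul]
    _ ≤ 2 * (2 * h) ^ p * (∫ x in unitBall N, I x) +
        2 * h ^ p * (2 ^ N * ∫ x in unitBall N, I x) := by gcongr
    _ = _ := by rw [Real.mul_rpow (by norm_num) h0.le]; ring

/-- Lower bound of a radial integral by a one-dimensional one in the logarithmic variable. -/
lemma radial_lower (N : ℕ) (hN : 2 ≤ N) (ψ : ℝ → ℝ) (hψ : Continuous ψ) (h0 : ∀ r, 0 ≤ ψ r)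
    (a b : ℝ) (hab : a ≤ b) (hb : b ≤ 0) :
    N * volume.real (unitBall N) * Real.exp a ^ N * ∫ t in a..b, ψ (Real.exp t) ≤
      ∫ x in unitBall N, ψ ‖x‖ := by
  have e1 : ∫ x in unitBall N, ψ ‖x‖ = ∫ x : Euc N, (Iio (1 : ℝ)).indicator ψ ‖x‖ := by
    rw [← integral_indicator (by exact measurableSet_ball)]
    congr 1; ext x
    simp [indicator, unitBall]
  have : Nontrivial (Euc N) := by
    apply Module.nontrivial_of_finrank_pos (R := ℝ)
    simp; omega
  rw [e1, integral_fun_norm_addHaar volume ((Iio (1 : ℝ)).indicator ψ)]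
  rw [finrank_euclideanSpace_fin, nsmul_eq_mul, smul_eq_mul, mul_assoc, mul_assoc]
  change _ ≤ (N : ℝ) * (volume.real (unitBall N) * _)
  gcongr
  set φ : ℝ → ℝ := fun r => r ^ (N - 1) * ψ r with hφ
  have hφc : Continuous φ := by fun_prop
  have e2 : ∫ y in Ioi (0 : ℝ), y ^ (N - 1) • (Iio (1 : ℝ)).indicator ψ y =
      ∫ y in Ioo (0 : ℝ) 1, φ y := by
    rw [← Ioi_inter_Iio, ← setIntegral_indicator measurableSet_Iio]
    congr 1; ext y
    by_cases hy : y < 1 <;> simp [indicator, hy, hφ]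
  rw [e2]
  have e3 : ∫ t in a..b, (φ ∘ Real.exp) t * Real.exp t = ∫ r in Real.exp a..Real.exp b, φ r :=
    intervalIntegral.integral_comp_mul_deriv (fun x _ => Real.hasDerivAt_exp x)
      Real.continuous_exp.continuousOn hφc
  have e4 : ∫ r in Real.exp a..Real.exp b, φ r ≤ ∫ y in Ioo (0 : ℝ) 1, φ y := by
    rw [intervalIntegral.integral_of_le (Real.exp_le_exp.2 hab), ← integral_Ioc_eq_integral_Ioo]
    refine setIntegral_mono_set ?_ ?_ ?_
    · exact (hφc.continuousOn.integrableOn_compact isCompact_Icc).mono_set Ioc_subset_Icc_self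
    · refine (ae_restrict_iff' measurableSet_Ioc).2 (Eventually.of_forall fun y hy => ?_)
      have := h0 y
      have := hy.1
      simp only [Pi.zero_apply, hφ]; positivity
    · refine LE.le.eventuallyLE (Ioc_subset_Ioc (Real.exp_pos a).le ?_)
      simpa using hb
  refine le_trans ?_ (e3.le.trans e4)
  rw [← intervalIntegral.integral_const_mul]
  refine intervalIntegral.integral_mono_on hab ?_ ?_ ?_
  · exact Continuous.intervalIntegrable (by fun_prop) _ _
  · exact Continuous.intervalIntegrable (by fun_prop) _ _
  · intro t ht
    have : (φ ∘ Real.exp) t * Real.exp t = Real.exp t ^ N * ψ (Real.exp t) := by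
      obtain ⟨n, rfl⟩ : ∃ n, N = n + 1 := ⟨N - 1, by omega⟩
      simp only [Function.comp, hφ, Nat.add_sub_cancel]; ring
    rw [this]
    have := h0 (Real.exp t)
    have := ht.1
    gcongr

lemma sq_integral_le_unit (g : ℝ → ℝ) (hg : Continuous g) :
    (∫ t in (0 : ℝ)..1, g t) ^ 2 ≤ ∫ t in (0 : ℝ)..1, g t ^ 2 := by
  set m := ∫ t in (0 : ℝ)..1, g t with hm
  have h1 : 0 ≤ ∫ t in (0 : ℝ)..1, (g t - m) ^ 2 :=
    intervalIntegral.integral_nonneg zero_le_one fun t _ => sq_nonneg _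
  have h2 : ∫ t in (0 : ℝ)..1, (g t - m) ^ 2 =
      (∫ t in (0 : ℝ)..1, g t ^ 2) - 2 * m * m + m ^ 2 := by
    have : ∀ t, (g t - m) ^ 2 = g t ^ 2 - 2 * m * g t + m ^ 2 := fun t => by ring
    simp_rw [this]
    rw [intervalIntegral.integral_add, intervalIntegral.integral_sub,
      intervalIntegral.integral_const_mul, ← hm]
    · simp
    all_goals exact Continuous.intervalIntegrable (by fun_prop) _ _
  nlinarith

/-- One-dimensional embedding. -/
lemma one_dim (g : ℝ → ℝ) (hg : Continuous g) (s : ℝ) (hs : 1 / 2 < s) (t0 η0 K P : ℝ)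
    (hη0 : 0 < η0) (hK : 0 ≤ K)
    (h1 : ∀ η, 0 < η → η ≤ η0 →
      ∫ t in (t0 - η)..t0, (g t - g (t - η)) ^ 2 ≤ K * η ^ (2 * s))
    (h2 : ∫ t in (t0 - η0)..t0, g t ^ 2 ≤ P) :
    g t0 ^ 2 ≤ 2 * (P / η0) +
      2 * (K * η0 ^ (2 * s - 1) / (1 - (2 : ℝ)⁻¹ ^ (s - 1 / 2)) ^ 2) := by
  set A : ℝ → ℝ := fun η => ∫ σ in (0 : ℝ)..1, g (t0 - η * σ) with hA
  have hAc : Continuous A := by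
    apply intervalIntegral.continuous_parametric_intervalIntegral_of_continuous'
    fun_prop
  have hA0 : A 0 = g t0 := by simp [hA]
  have hstep : ∀ η, 0 < η → η ≤ η0 → |A η - A (η / 2)| ≤ √K * η ^ (s - 1 / 2) := by
    intro η hη hη'
    have hhalf : A η = (1 / 2) * (∫ σ in (0 : ℝ)..1, g (t0 - (η / 2) * σ)) +
        (1 / 2) * ∫ σ in (0 : ℝ)..1, g (t0 - (η / 2) * σ - η / 2) := by
      have s1 : A η = (∫ σ in (0 : ℝ)..(1 / 2), g (t0 - η * σ)) +
          ∫ σ in (1 / 2 : ℝ)..1, g (t0 - η * σ) := by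
        rw [hA, intervalIntegral.integral_add_adjacent_intervals] <;>
          exact Continuous.intervalIntegrable (by fun_prop) _ _
      rw [s1]
      congr 1
      · rw [intervalIntegral.integral_comp_sub_mul g hη.ne',
          intervalIntegral.integral_comp_sub_mul g (by positivity : η / 2 ≠ 0)]
        simp only [smul_eq_mul]
        rw [← mul_assoc]
        congr 1
        · field_simp
        · ring_nf
      · have : ∀ σ, t0 - (η / 2) * σ - η / 2 = (t0 - η / 2) - (η / 2) * σ := fun σ => by ring
        simp_rw [this]
        rw [intervalIntegral.integral_comp_sub_mul g hη.ne',
          intervalIntegral.integral_comp_sub_mul g (by positivity : η / 2 ≠ 0)]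
        simp only [smul_eq_mul]
        rw [← mul_assoc]
        congr 1
        · field_simp
        · ring_nf
    have hdiff : A η - A (η / 2) =
        -(1 / 2) * ∫ σ in (0 : ℝ)..1, (g (t0 - (η / 2) * σ) - g (t0 - (η / 2) * σ - η / 2)) := by
      rw [hhalf, intervalIntegral.integral_sub]
      · simp only [hA]; ring
      all_goals exact Continuous.intervalIntegrable (by fun_prop) _ _
    have hsq : (A η - A (η / 2)) ^ 2 ≤ K * η ^ (2 * s - 1) := by
      have j1 := sq_integral_le_unit
        (fun σ => g (t0 - (η / 2) * σ) - g (t0 - (η / 2) * σ - η / 2)) (by fun_prop)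
      have j2 : ∫ σ in (0 : ℝ)..1, (g (t0 - (η / 2) * σ) - g (t0 - (η / 2) * σ - η / 2)) ^ 2 =
          (η / 2)⁻¹ * ∫ t in (t0 - η / 2)..t0, (g t - g (t - η / 2)) ^ 2 := by
        rw [intervalIntegral.integral_comp_sub_mul (fun t => (g t - g (t - η / 2)) ^ 2)
          (by positivity : η / 2 ≠ 0)]
        simp
      have j3 := h1 (η / 2) (by positivity) (by linarith)
      have j4 : (η / 2) ^ (2 * s) ≤ η ^ (2 * s) / 2 := by
        rw [Real.div_rpow hη.le (by norm_num)]
        gcongr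
        calc (2 : ℝ) = 2 ^ (1 : ℝ) := by simp
          _ ≤ 2 ^ (2 * s) := Real.rpow_le_rpow_of_exponent_le (by norm_num) (by linarith)
      rw [hdiff, mul_pow]
      rw [j2] at j1
      have j5 : (η / 2)⁻¹ * ∫ t in (t0 - η / 2)..t0, (g t - g (t - η / 2)) ^ 2 ≤
          (η / 2)⁻¹ * (K * (η ^ (2 * s) / 2)) := by
        gcongr
        exact j3.trans (by gcongr)
      have j6 : (η / 2)⁻¹ * (K * (η ^ (2 * s) / 2)) = K * η ^ (2 * s - 1) := by
        rw [Real.rpow_sub hη, Real.rpow_one]; field_simp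
      have j7 : 0 ≤ K * η ^ (2 * s - 1) := by positivity
      nlinarith
    have : √K * η ^ (s - 1 / 2) = √(K * η ^ (2 * s - 1)) := by
      rw [Real.sqrt_mul hK]
      congr 1
      rw [Real.sqrt_eq_rpow, ← Real.rpow_mul hη.le]; congr 1; ring
    rw [this]
    exact Real.abs_le_sqrt hsq
  set q : ℝ := (2 : ℝ)⁻¹ ^ (s - 1 / 2) with hq
  have hq1 : q < 1 := Real.rpow_lt_one (by norm_num) (by norm_num) (by linarith)
  have hdist : ∀ n : ℕ, dist (A (η0 * (2 : ℝ)⁻¹ ^ n)) (A (η0 * (2 : ℝ)⁻¹ ^ (n + 1))) ≤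
      (√K * η0 ^ (s - 1 / 2)) * q ^ n := by
    intro n
    have hle : (2 : ℝ)⁻¹ ^ n ≤ 1 := pow_le_one₀ (by norm_num) (by norm_num)
    have := hstep (η0 * (2 : ℝ)⁻¹ ^ n) (by positivity) (by nlinarith)
    rw [Real.dist_eq, pow_succ]
    rw [Real.mul_rpow hη0.le (by positivity), ← Real.rpow_natCast, ← Real.rpow_mul (by norm_num),
      mul_comm (n : ℝ), Real.rpow_mul (by norm_num), ← hq, Real.rpow_natCast, ← mul_assoc] at this
    simpa only [div_eq_mul_inv, mul_assoc, Real.rpow_natCast] using this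
  have htend : Tendsto (fun n : ℕ => A (η0 * (2 : ℝ)⁻¹ ^ n)) atTop (𝓝 (g t0)) := by
    rw [← hA0]
    refine (hAc.tendsto 0).comp ?_
    have := (tendsto_pow_atTop_nhds_zero_of_lt_one (r := (2 : ℝ)⁻¹) (by norm_num)
      (by norm_num)).const_mul η0
    simpa using this
  have hfin := dist_le_of_le_geometric_of_tendsto₀ q (√K * η0 ^ (s - 1 / 2)) hq1 hdist htend
  simp only [pow_zero, mul_one] at hfin
  have hA2 : A η0 ^ 2 ≤ P / η0 := by
    refine (sq_integral_le_unit (fun σ => g (t0 - η0 * σ)) (by fun_prop)).trans ?_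
    rw [intervalIntegral.integral_comp_sub_mul (fun t => g t ^ 2) hη0.ne']
    simp only [mul_one, mul_zero, sub_zero, smul_eq_mul]
    rw [div_eq_inv_mul]
    gcongr
  have hB : (A η0 - g t0) ^ 2 ≤ K * η0 ^ (2 * s - 1) / (1 - q) ^ 2 := by
    have e : K * η0 ^ (2 * s - 1) / (1 - q) ^ 2 = (√K * η0 ^ (s - 1 / 2) / (1 - q)) ^ 2 := by
      rw [div_pow, mul_pow, Real.sq_sqrt hK]
      congr 2
      rw [← Real.rpow_natCast (η0 ^ (s - 1 / 2)), ← Real.rpow_mul hη0.le]; congr 1; push_cast; ring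
    rw [e, ← sq_abs]
    rw [Real.dist_eq] at hfin
    gcongr
  nlinarith [sq_nonneg (A η0 + (A η0 - g t0))]

lemma cNs_pos (N : ℕ) (s : ℝ) (hs : s ∈ Set.Ioo (1/2 : ℝ) 1) : 0 < cNs N s := by
  have h1 : 0 < s := by linarith [hs.1]
  have h2 : 0 < 1 - s := by linarith [hs.2]
  have h3 : 0 < Real.Gamma (((N : ℝ) + 2 * s) / 2) := Real.Gamma_pos_of_pos (by positivity)
  have h4 : 0 < Real.Gamma (1 - s) := Real.Gamma_pos_of_pos h2
  unfold cNs
  positivity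

/-- Sup-norm estimate with explicit dependence on the scale `η0`. -/
lemma sup_est (N : ℕ) (hN : 2 ≤ N) (s : ℝ) (hs : s ∈ Set.Ioo (1/2 : ℝ) 1)
    (ρ : ℝ) (hρ : ρ ∈ Set.Ioo (0 : ℝ) 1) :
    ∃ k1 k2 : ℝ, 0 < k1 ∧ 0 < k2 ∧ ∀ η0 : ℝ, 0 < η0 → η0 ≤ 1 / 2 →
      ∀ u : Euc N → ℝ, testFun N (unitBall N) u → IsRadial N u →
      (∀ x ∈ Metric.ball (0 : Euc N) ρ, u x = 0) → ∀ x ∈ unitBall N,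
      u x ^ 2 ≤ k1 / η0 * (∫ x in unitBall N, (u x) ^ 2) + k2 * η0 ^ (2 * s - 1) *
        ∫ x in unitBall N, ∫ y in unitBall N, Fk N (N + 2 * s) u x y := by
  obtain ⟨hs1, hs2⟩ := hs
  obtain ⟨hρ0, hρ1⟩ := hρ
  set p : ℝ := N + 2 * s with hp
  have hp0 : 0 < p := by positivity
  have hp2 : p < N + 2 := by linarith
  set ω := volume.real (unitBall N) with hω
  have hω0 : 0 < ω := by
    rw [hω, unitBall]
    exact ENNReal.toReal_pos (Metric.measure_ball_pos _ _ one_pos).ne' measure_ball_lt_top.ne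
  have hN0 : (0 : ℝ) < N := by exact_mod_cast (by omega : 0 < N)
  set β : ℝ := N * ω * (ρ * Real.exp (-1)) ^ N with hβ
  have hβ0 : 0 < β := by positivity
  set c1 : ℝ := 2 * 2 ^ p + 2 * 2 ^ N with hc1
  have hc10 : 0 < c1 := by positivity
  set q : ℝ := (2 : ℝ)⁻¹ ^ (s - 1 / 2) with hq
  have hq1 : q < 1 := Real.rpow_lt_one (by norm_num) (by norm_num) (by linarith)
  have hq2 : 0 < 1 - q := by linarith
  refine ⟨2 / β, 2 * (c1 / (ω * β)) / (1 - q) ^ 2, by positivity, by positivity, ?_⟩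
  intro η0 hη0 hη0' u hu hrad hzero x hx
  obtain ⟨hsm, hcs, -⟩ := hu
  obtain ⟨L, hL⟩ := ContDiff.lipschitzWith_of_hasCompactSupport hcs hsm (by simp)
  have huc := hL.continuous
  set G := ∫ x in unitBall N, ∫ y in unitBall N, Fk N p u x y with hG
  have hG0 : 0 ≤ G := integral_nonneg fun _ => integral_nonneg fun _ => Fk_nonneg _ _ _ _ _
  set T := ∫ x in unitBall N, (u x) ^ 2 with hT
  have hT0 : 0 ≤ T := integral_nonneg fun _ => sq_nonneg _
  by_cases hxρ : ‖x‖ < ρ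
  · rw [hzero x (by simpa using hxρ)]
    simp only [ne_eq, OfNat.ofNat_ne_zero, not_false_eq_true, zero_pow]
    positivity
  push Not at hxρ
  have hx1 : ‖x‖ < 1 := by simpa [unitBall] using hx
  have hx0 : 0 < ‖x‖ := by linarith
  set e : Euc N := (‖x‖)⁻¹ • x with he
  have hen : ‖e‖ = 1 := by rw [he, norm_smul, norm_inv, norm_norm]; field_simp
  set f : ℝ → ℝ := fun r => u (r • e) with hf
  have hfc : Continuous f := by fun_prop
  have huf : ∀ y, u y = f ‖y‖ := fun y => hrad _ _ (by
    rw [norm_smul, hen, norm_norm, mul_one])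
  set t0 := Real.log ‖x‖ with ht0
  have ht00 : t0 ≤ 0 := Real.log_nonpos hx0.le hx1.le
  have hexp : ∀ η, η ≤ 1 / 2 → ρ * Real.exp (-1) ≤ Real.exp (t0 - η) := by
    intro η hη
    rw [sub_eq_add_neg, Real.exp_add, ht0, Real.exp_log hx0]
    gcongr
    linarith
  have hlow : ∀ ψ : ℝ → ℝ, Continuous ψ → (∀ r, 0 ≤ ψ r) → ∀ η, 0 < η → η ≤ 1 / 2 →
      ∫ t in (t0 - η)..t0, ψ (Real.exp t) ≤ (∫ x in unitBall N, ψ ‖x‖) / β := by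
    intro ψ hψ hψ0 η hη hη'
    have := radial_lower N hN ψ hψ hψ0 (t0 - η) t0 (by linarith) ht00
    rw [le_div_iff₀ hβ0, mul_comm]
    refine le_trans ?_ this
    rw [hβ]
    have h3 : 0 ≤ ∫ t in (t0 - η)..t0, ψ (Real.exp t) :=
      intervalIntegral.integral_nonneg (by linarith) fun t _ => hψ0 _
    have := hexp η hη'
    gcongr
  have hmain := one_dim (fun t => f (Real.exp t)) (by fun_prop) s hs1 t0 η0
    (c1 / (ω * β) * G) (T / β) hη0 (by positivity) ?_ ?_
  · have e1 : f (Real.exp t0) = u x := by rw [ht0, Real.exp_log hx0, ← huf]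
    simp only [e1] at hmain
    refine hmain.trans (le_of_eq ?_)
    rw [← hq]
    field_simp
  · intro η hη hη'
    set h := 1 - Real.exp (-η) with hh
    have hh0 : 0 < h := by
      have : Real.exp (-η) < 1 := by rw [Real.exp_lt_one_iff]; linarith
      linarith
    have hhη : h ≤ η := by linarith [Real.add_one_le_exp (-η)]
    have hl : 1 - h = Real.exp (-η) := by rw [hh]; ring
    have k1 := hlow (fun r => (f r - f ((1 - h) * r)) ^ 2) (by fun_prop)
      (fun r => sq_nonneg _) η hη (by linarith)
    have k2 : ∀ y : Euc N, (f ‖y‖ - f ((1 - h) * ‖y‖)) ^ 2 = (u y - u ((1 - h) • y)) ^ 2 := by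
      intro y
      rw [huf y, huf ((1 - h) • y), norm_smul, Real.norm_of_nonneg (by rw [hl]; positivity)]
    simp only [k2] at k1
    have k3 : ∀ t, (1 - h) * Real.exp t = Real.exp (t - η) := by
      intro t; rw [hl, ← Real.exp_add]; congr 1; ring
    simp only [k3] at k1
    refine k1.trans ?_
    have k4 := dilation_est N hN p hp0 hp2 u L hL h hh0 (by linarith)
    rw [← hG, ← hω, ← hc1] at k4
    have k5 : h ^ p = h ^ N * h ^ (2 * s) := by
      rw [hp, Real.rpow_add hh0, Real.rpow_natCast]
    have k6 : ω * (∫ y in unitBall N, (u y - u ((1 - h) • y)) ^ 2) ≤ c1 * h ^ (2 * s) * G := by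
      rw [k5] at k4
      have : 0 < h ^ N := by positivity
      refine le_of_mul_le_mul_left ?_ this
      linarith
    have k7 : h ^ (2 * s) ≤ η ^ (2 * s) := Real.rpow_le_rpow hh0.le hhη (by linarith)
    have k8 : c1 * h ^ (2 * s) * G ≤ c1 * η ^ (2 * s) * G := by gcongr
    rw [div_le_iff₀ hβ0]
    have : c1 / (ω * β) * G * η ^ (2 * s) * β = (c1 * η ^ (2 * s) * G) / ω := by field_simp
    rw [this, le_div_iff₀ hω0]
    linarith
  · have k1 := hlow (fun r => f r ^ 2) (by fun_prop) (fun r => sq_nonneg _) η0 hη0 hη0'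
    simp only [← huf] at k1
    exact k1

/-- for radial test functions vanishing on B_ρ,
Q_{N,s,B}(u) ≥ M‖u‖²_{2*_s} − C_{ρ,M}‖u‖²_{L²}. -/
theorem statement13 (N : ℕ) (hN : 2 ≤ N) (s : ℝ) (hs : s ∈ Set.Ioo (1/2 : ℝ) 1)
    (M : ℝ) (hM : 0 < M) (ρ : ℝ) (hρ : ρ ∈ Set.Ioo (0 : ℝ) 1) :
    ∃ C : ℝ, 0 < C ∧ ∀ u : Euc N → ℝ, testFun N (unitBall N) u → IsRadial N u →
      (∀ x ∈ Metric.ball (0 : Euc N) ρ, u x = 0) →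
      gagliardo N s (unitBall N) u ≥
        M * (lpNormOn N (critExp N s) (unitBall N) u) ^ 2 -
          C * ∫ x in unitBall N, (u x) ^ 2 := by
  obtain ⟨k1, k2, hk1, hk2, hest⟩ := sup_est N hN s hs ρ hρ
  have hc := cNs_pos N s hs
  have hNR : (2 : ℝ) ≤ N := by exact_mod_cast hN
  set P := critExp N s with hP
  have hP0 : 0 < P := by
    rw [hP, critExp]
    have : 0 < (N : ℝ) - 2 * s := by linarith [hs.2]
    positivity
  set ω := volume.real (unitBall N) with hω
  have hω0 : 0 < ω := by
    rw [hω, unitBall]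
    exact ENNReal.toReal_pos (Metric.measure_ball_pos _ _ one_pos).ne' measure_ball_lt_top.ne
  set W : ℝ := (ω ^ (1 / P)) ^ 2 with hW
  have hW0 : 0 < W := by positivity
  set δ : ℝ := (cNs N s / 2) / (M * W * k2) with hδ
  have hδ0 : 0 < δ := by positivity
  have hθ : 0 < 2 * s - 1 := by linarith [hs.1]
  obtain ⟨η0, hη0, hη0', hηδ⟩ : ∃ η0 : ℝ, 0 < η0 ∧ η0 ≤ 1 / 2 ∧ η0 ^ (2 * s - 1) ≤ δ := by
    refine ⟨min (1 / 2) (δ ^ (1 / (2 * s - 1))), by positivity, min_le_left _ _, ?_⟩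
    calc (min (1 / 2) (δ ^ (1 / (2 * s - 1)))) ^ (2 * s - 1)
        ≤ (δ ^ (1 / (2 * s - 1))) ^ (2 * s - 1) :=
          Real.rpow_le_rpow (by positivity) (min_le_right _ _) hθ.le
      _ = δ := by
          rw [← Real.rpow_mul hδ0.le, one_div, inv_mul_cancel₀ hθ.ne', Real.rpow_one]
  refine ⟨M * W * (k1 / η0), by positivity, fun u hu hrad hzero => ?_⟩
  have hsup := hest η0 hη0 hη0' u hu hrad hzero
  set T := ∫ x in unitBall N, (u x) ^ 2 with hT
  set G := ∫ x in unitBall N, ∫ y in unitBall N, Fk N (N + 2 * s) u x y with hG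
  have hG0 : 0 ≤ G := integral_nonneg fun _ => integral_nonneg fun _ => Fk_nonneg _ _ _ _ _
  have hT0 : 0 ≤ T := integral_nonneg fun _ => sq_nonneg _
  have hgag : gagliardo N s (unitBall N) u = cNs N s / 2 * G := rfl
  set X : ℝ := k1 / η0 * T + k2 * η0 ^ (2 * s - 1) * G with hX
  have hX0 : 0 ≤ X := by positivity
  have hint : ∫ x in unitBall N, |u x| ^ P ≤ ω * (√X) ^ P := by
    have : ∫ x in unitBall N, (√X) ^ P = ω * (√X) ^ P := by
      rw [setIntegral_const, smul_eq_mul]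
    rw [← this]
    have huc : Continuous u := hu.1.continuous
    refine setIntegral_mono_on ?_ (integrableOn_const (by exact measure_ball_lt_top.ne))
      measurableSet_ball fun x hx => ?_
    · have hcont : Continuous (fun x => |u x| ^ P) :=
        huc.abs.rpow_const fun _ => Or.inr hP0.le
      exact (hcont.continuousOn.integrableOn_compact
        (isCompact_closedBall (0 : Euc N) 1)).mono_set Metric.ball_subset_closedBall
    · exact Real.rpow_le_rpow (abs_nonneg _) (Real.abs_le_sqrt (hsup x hx)) hP0.le
  have hlp : (lpNormOn N P (unitBall N) u) ^ 2 ≤ W * X := by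
    have h0 : 0 ≤ ∫ x in unitBall N, |u x| ^ P := integral_nonneg fun _ => by positivity
    have h1 : lpNormOn N P (unitBall N) u ≤ ω ^ (1 / P) * √X := by
      unfold lpNormOn
      calc _ ≤ (ω * (√X) ^ P) ^ (1 / P) := Real.rpow_le_rpow h0 hint (by positivity)
        _ = ω ^ (1 / P) * √X := by
          rw [Real.mul_rpow hω0.le (by positivity), ← Real.rpow_mul (Real.sqrt_nonneg _),
            mul_one_div_cancel hP0.ne', Real.rpow_one]
    have h2 : 0 ≤ lpNormOn N P (unitBall N) u := Real.rpow_nonneg h0 _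
    calc _ ≤ (ω ^ (1 / P) * √X) ^ 2 := by gcongr
      _ = W * X := by rw [mul_pow, Real.sq_sqrt hX0]
  rw [hgag, ge_iff_le]
  have h3 : M * lpNormOn N P (unitBall N) u ^ 2 ≤ M * (W * X) := by gcongr
  have h4 : M * W * k2 * η0 ^ (2 * s - 1) * G ≤ cNs N s / 2 * G := by
    gcongr
    calc M * W * k2 * η0 ^ (2 * s - 1) ≤ M * W * k2 * δ := by gcongr
      _ = cNs N s / 2 := by rw [hδ]; field_simp
  have h5 : M * (W * X) = M * W * (k1 / η0) * T + M * W * k2 * η0 ^ (2 * s - 1) * G := by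
    rw [hX]; ring
  linarith
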